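/- Let G be a discrete group and let ∂_F G be a Furstenberg boundary of G. For s ∈ G let Fix(s) = {x ∈ ∂_F G : sx = x}. Then each set Fix(s) is clopen, and there exists a G-equivariant u.c.p. map Φ : C*_λ(G) → C(∂_F G) such that Φ(λ_s) equals the indicator function of Fix(s) for every s ∈ G. -/

import Mathlib

noncomputable section
open scoped ENNReal ComplexOrder lp
open MeasureTheory
set_option maxHeartbeats 1000000
set_option synthInstance.maxHeartbeats 1000000

universe u

variable {G : Type u} [Group G]

theorem translat_mem (g : G) (f : ℓ²(G, ℂ)) : Memℓp (fun h => f (g⁻¹ * h)) 2 := by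
  have hf : Summable fun i : G => ‖f i‖ ^ (2 : ℝ≥0∞).toReal :=
    (memℓp_gen_iff (by norm_num)).1 (lp.memℓp f)
  exact memℓp_gen ((Equiv.mulLeft g⁻¹).summable_iff.2 hf)

/-- The left regular representation of `g ∈ G` as a linear isometric bijection of `ℓ²(G)`,
given by `(λ_g ξ)(h) = ξ(g⁻¹ h)`. -/
def lregE (g : G) : ℓ²(G, ℂ) ≃ₗᵢ[ℂ] ℓ²(G, ℂ) :=
{ toFun := fun f => ⟨fun h => f (g⁻¹ * h), translat_mem g f⟩
  invFun := fun f => ⟨fun h => f (g * h), by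
    have := translat_mem g⁻¹ f; simp only [inv_inv] at this; exact this⟩
  map_add' := by intro f₁ f₂; ext h; simp [lp.coeFn_add]; rfl
  map_smul' := by intro c f; ext h; simp [lp.coeFn_smul]
  left_inv := by intro f; ext h; simp
  right_inv := by intro f; ext h; simp
  norm_map' := by
    intro f
    rw [lp.norm_eq_tsum_rpow (by norm_num) f, lp.norm_eq_tsum_rpow (by norm_num)]
    congr 1
    exact (Equiv.mulLeft g⁻¹).tsum_eq (fun h => ‖f h‖ ^ (2 : ℝ≥0∞).toReal) }

/-- The left regular representation `λ` as bounded operators on `ℓ²(G)`. -/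
def lreg (g : G) : ℓ²(G, ℂ) →L[ℂ] ℓ²(G, ℂ) :=
  (lregE g).toContinuousLinearEquiv.toContinuousLinearMap

variable (G) in
/-- The reduced group C*-algebra `C*_λ(G)`: the norm-closed star subalgebra of the algebra of
bounded operators on `ℓ²(G)` generated by the image of the left regular representation. -/
def redCstar : StarSubalgebra ℂ (ℓ²(G, ℂ) →L[ℂ] ℓ²(G, ℂ)) :=
  (StarAlgebra.adjoin ℂ (Set.range (lreg (G := G)))).topologicalClosure

/-- `λ_g` as an element of the reduced group C*-algebra. -/
def uu (g : G) : redCstar G :=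
  ⟨lreg g, StarSubalgebra.le_topologicalClosure _ (StarAlgebra.subset_adjoin ℂ _ ⟨g, rfl⟩)⟩

attribute [irreducible] redCstar lreg lregE uu

/-- `X` is a `G`-boundary: a nonempty compact Hausdorff `G`-space such that for every regular
Borel probability measure `μ` on `X` and every `x ∈ X`, the point mass `δ_x` lies in the
weak* closure of the orbit `Gμ`. -/
def IsBoundary (G X : Type*) [Group G] [TopologicalSpace X] [CompactSpace X] [T2Space X]
    [MulAction G X] [ContinuousConstSMul G X] : Prop :=
  Nonempty X ∧
  letI : MeasurableSpace X := borel X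
  haveI : BorelSpace X := ⟨rfl⟩
  ∀ (μ : ProbabilityMeasure X) (x : X),
    (⟨Measure.dirac x, Measure.dirac.isProbabilityMeasure⟩ : ProbabilityMeasure X) ∈
      closure {ν : ProbabilityMeasure X |
        ∃ g : G, ν = μ.map ((continuous_const_smul g).measurable.aemeasurable (μ := μ.toMeasure))
          (f := (g • ·))}

/-- `Y` is a Furstenberg boundary of `G`: a `G`-boundary admitting a continuous `G`-equivariant
surjection onto every `G`-boundary. -/
def IsFurstenberg (G Y : Type u) [Group G] [TopologicalSpace Y] [CompactSpace Y] [T2Space Y]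
    [MulAction G Y] [ContinuousConstSMul G Y] : Prop :=
  IsBoundary G Y ∧
  ∀ (X : Type u) (iT : TopologicalSpace X) (iC : @CompactSpace X iT) (iH : @T2Space X iT)
    (iM : MulAction G X) (iS : @ContinuousConstSMul G X iT iM.toSMul),
    @IsBoundary G X _ iT iC iH iM iS →
      ∃ q : Y → X, @Continuous _ _ _ iT q ∧ Function.Surjective q ∧
        ∀ (g : G) (y : Y), q (g • y) = g • q y

/-- A linear map into `C(Y, ℂ)` is unital completely positive: it is unital and its entrywise
extensions to matrix algebras map positive elements to positive elements. -/
def IsUCP {Y : Type u} [TopologicalSpace Y] (Φ : redCstar G →L[ℂ] C(Y, ℂ)) : Prop :=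
  Φ 1 = 1 ∧ ∀ (n : ℕ) (M : Matrix (Fin n) (Fin n) (redCstar G)),
    (∃ N : Matrix (Fin n) (Fin n) (redCstar G), M = star N * N) →
      ∃ P : Matrix (Fin n) (Fin n) C(Y, ℂ), M.map Φ = star P * P

/-- `G`-equivariance of a map `C*_λ(G) → C(Y)`, for the conjugation action on `C*_λ(G)` and
the translation action on `C(Y)`: `Φ(λ_g a λ_g⁻¹)(y) = Φ(a)(g⁻¹ y)`. -/
def IsEquivariant {Y : Type u} [TopologicalSpace Y] [MulAction G Y]
    (Φ : redCstar G →L[ℂ] C(Y, ℂ)) : Prop :=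
  ∀ (g : G) (a : redCstar G) (y : Y), Φ (uu g * a * uu g⁻¹) y = Φ a (g⁻¹ • y)

/-!
The closure of the extreme points of a minimal invariant compact convex set of probability
measures is a boundary, so a Furstenberg boundary `Y` maps equivariantly and continuously to the
probability measures on any compact `G`-space, in particular on the Stone–Čech compactification
`βG`. As the only equivariant continuous map from `Y` to the measures on `Y` is `y ↦ δ_y`, this
transports extremal disconnectedness from `βG` to `Y`, and fixed-point sets in extremally
disconnected spaces are clopen. The same map provides an invariant mean for each stabilizer `G_y`,
hence almost `G_y`-invariant unit vectors in `ℓ²(G_y) ⊆ ℓ²(G)`. A weak* limit of their vector states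
is a state `φ_y` of `C*_λ(G)` sending `λ_s` to `1` if `s` fixes `y` and to `0` otherwise, and
`Φ(a)(y) = φ_y(a)` is continuous in `y` because the fixed-point sets are clopen.
-/

section States

variable {E F X Z : Type*} [AddCommGroup E] [Module ℝ E] [TopologicalSpace E] [AddCommGroup F]
  [Module ℝ F] [TopologicalSpace F] [TopologicalSpace X] [TopologicalSpace Z]

/-- The transpose of a continuous linear map, acting between weak* duals. -/
def dualMap (T : E →L[ℝ] F) : WeakDual ℝ F →L[ℝ] WeakDual ℝ E where
  toFun φ := StrongDual.toWeakDual ((WeakDual.toStrongDual φ).comp T)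
  map_add' _ _ := rfl
  map_smul' _ _ := rfl
  cont := WeakDual.continuous_of_continuous_eval fun e => WeakDual.eval_continuous (T e)

variable (X) in
/-- The states of `C(X, ℝ)`: the positive unital functionals. By the Riesz representation theorem
these are the regular Borel probability measures on `X`, with the weak* topology. -/
def stateSpace : Set (WeakDual ℝ C(X, ℝ)) :=
  {φ | (∀ f, 0 ≤ f → 0 ≤ φ f) ∧ φ 1 = 1}

theorem state_mono {φ : WeakDual ℝ C(X, ℝ)} (hφ : φ ∈ stateSpace X) {f g : C(X, ℝ)}
    (h : f ≤ g) : φ f ≤ φ g := by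
  simpa only [map_sub, sub_nonneg] using hφ.1 (g - f) (sub_nonneg.2 h)

theorem abs_state_sub_le {φ : WeakDual ℝ C(X, ℝ)} (hφ : φ ∈ stateSpace X) (f : C(X, ℝ)) (c : ℝ) :
    |φ f - c| ≤ φ |f - c • 1| := by
  have hc : φ (f - c • 1) = φ f - c := by
    rw [map_sub, map_smul, hφ.2, smul_eq_mul, mul_one]
  rw [← hc, abs_le']
  exact ⟨state_mono hφ (le_abs_self _), by
    simpa only [map_neg] using state_mono hφ (neg_le_abs (f - c • 1))⟩

theorem isClosed_stateSpace : IsClosed (stateSpace X) := by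
  simp only [stateSpace, Set.ofPred_and, Set.ofPred_forall]
  refine .inter (isClosed_iInter fun f => isClosed_iInter fun _ => ?_) ?_
  · exact isClosed_le continuous_const (WeakDual.eval_continuous f)
  · exact isClosed_eq (WeakDual.eval_continuous 1) continuous_const

theorem convex_stateSpace : Convex ℝ (stateSpace X) := by
  intro φ hφ ψ hψ a b ha hb hab
  refine ⟨fun f hf => ?_, ?_⟩
  · exact add_nonneg (mul_nonneg ha (hφ.1 f hf)) (mul_nonneg hb (hψ.1 f hf))
  · change a * φ 1 + b * ψ 1 = 1
    rw [hφ.2, hψ.2, mul_one, mul_one, hab]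

/-- The point mass at `x`, as a functional on `C(X, ℝ)`. -/
def evalState (x : X) : WeakDual ℝ C(X, ℝ) :=
  StrongDual.toWeakDual (ContinuousMap.evalCLM ℝ x)

@[simp]
theorem evalState_apply (x : X) (f : C(X, ℝ)) : evalState x f = f x := rfl

theorem evalState_mem_stateSpace (x : X) : evalState x ∈ stateSpace X := ⟨fun _ hf => hf x, rfl⟩

theorem continuous_evalState : Continuous (evalState : X → WeakDual ℝ C(X, ℝ)) :=
  WeakDual.continuous_of_continuous_eval fun f => f.continuous

/-- The pushforward of functionals (in particular of probability measures) along `p`. -/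
def pushforward (p : C(X, Z)) : WeakDual ℝ C(X, ℝ) →L[ℝ] WeakDual ℝ C(Z, ℝ) :=
  dualMap ⟨(ContinuousMap.compRightAlgHom ℝ ℝ p).toLinearMap,
    ContinuousMap.compRightAlgHom_continuous ℝ ℝ p⟩

@[simp]
theorem pushforward_apply (p : C(X, Z)) (φ : WeakDual ℝ C(X, ℝ)) (f : C(Z, ℝ)) :
    pushforward p φ f = φ (f.comp p) := rfl

theorem pushforward_mem_stateSpace (p : C(X, Z)) {φ : WeakDual ℝ C(X, ℝ)}
    (hφ : φ ∈ stateSpace X) : pushforward p φ ∈ stateSpace Z :=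
  ⟨fun f hf => hφ.1 (f.comp p) fun x => hf (p x), hφ.2⟩

/-- A state concentrated at `x`, in the sense that it annihilates the nonnegative functions
vanishing at `x`, is the point mass at `x`. -/
theorem eq_evalState {φ : WeakDual ℝ C(X, ℝ)} (hφ : φ ∈ stateSpace X) {x : X}
    (h : ∀ f : C(X, ℝ), 0 ≤ f → f x = 0 → φ f ≤ 0) : φ = evalState x := by
  refine DFunLike.ext _ _ fun f => ?_
  have hf : φ |f - f x • 1| ≤ 0 := h _ (abs_nonneg _) (by simp)
  exact sub_eq_zero.1 (abs_nonpos_iff.1 ((abs_state_sub_le hφ f (f x)).trans hf))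

variable [CompactSpace X]

theorem abs_state_le_norm {φ : WeakDual ℝ C(X, ℝ)} (hφ : φ ∈ stateSpace X) (f : C(X, ℝ)) :
    |φ f| ≤ ‖f‖ := by
  have h : |f| ≤ ‖f‖ • (1 : C(X, ℝ)) := fun x => by
    simpa using f.norm_coe_le_norm x
  calc |φ f| ≤ φ |f| := by simpa using abs_state_sub_le hφ f 0
    _ ≤ φ (‖f‖ • 1) := state_mono hφ h
    _ = ‖f‖ := by rw [map_smul, hφ.2, smul_eq_mul, mul_one]

theorem isCompact_stateSpace : IsCompact (stateSpace X) := by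
  refine (WeakDual.isCompact_closedBall 0 1).of_isClosed_subset isClosed_stateSpace
    fun φ hφ => mem_closedBall_zero_iff.2 ?_
  exact ContinuousLinearMap.opNorm_le_bound _ zero_le_one fun f =>
    (abs_state_le_norm hφ f).trans_eq (one_mul _).symm

theorem evalState_mem_closure {A : Set (WeakDual ℝ C(X, ℝ))} (hA : A ⊆ stateSpace X) {x : X}
    (h : ∀ f : C(X, ℝ), 0 ≤ f → f x = 0 → ∀ ε > 0, ∃ φ ∈ A, φ f < ε) :
    evalState x ∈ closure A := by
  have hcl : closure A ⊆ stateSpace X := closure_minimal hA isClosed_stateSpace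
  let I := {p : C(X, ℝ) × ℝ // 0 ≤ p.1 ∧ p.1 x = 0 ∧ 0 < p.2}
  let C : I → Set (WeakDual ℝ C(X, ℝ)) := fun p => closure A ∩ {φ | φ p.1.1 ≤ p.1.2}
  have hC : ∀ p, IsClosed (C p) := fun p =>
    isClosed_closure.inter (isClosed_le (WeakDual.eval_continuous _) continuous_const)
  have hdir : Directed (· ⊇ ·) C := by
    rintro ⟨⟨f, ε⟩, hf, hfx, hε⟩ ⟨⟨g, δ⟩, hg, hgx, hδ⟩
    refine ⟨⟨⟨f + g, min ε δ⟩, add_nonneg hf hg, ?_, lt_min hε hδ⟩, ?_, ?_⟩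
    · rw [ContinuousMap.add_apply, hfx, hgx, add_zero]
    · exact fun φ ⟨hφ, h⟩ => ⟨hφ, (state_mono (hcl hφ) (le_add_of_nonneg_right hg)).trans
        (h.trans (min_le_left _ _))⟩
    · exact fun φ ⟨hφ, h⟩ => ⟨hφ, (state_mono (hcl hφ) (le_add_of_nonneg_left hf)).trans
        (h.trans (min_le_right _ _))⟩
  have : Nonempty I := ⟨⟨0, 1⟩, le_rfl, rfl, one_pos⟩
  obtain ⟨φ, hφ⟩ := IsCompact.nonempty_iInter_of_directed_nonempty_isCompact_isClosed C hdir
    (fun ⟨⟨f, ε⟩, hf, hfx, hε⟩ => (h f hf hfx ε hε).imp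
      fun _ hφ => ⟨subset_closure hφ.1, hφ.2.le⟩)
    (fun p => (isCompact_stateSpace.of_isClosed_subset isClosed_closure hcl).of_isClosed_subset
      (hC p) Set.inter_subset_left) hC
  rw [Set.mem_iInter] at hφ
  have hφA : φ ∈ closure A := (hφ (Classical.arbitrary I)).1
  rwa [← eq_evalState (hcl hφA) fun f hf hfx => le_of_forall_pos_le_add fun ε hε => by
    simpa using (hφ ⟨⟨f, ε⟩, hf, hfx, hε⟩).2]

/-- Point masses are extreme, so this is an instance of Milman's converse to Krein–Milman. -/
theorem evalState_mem_closure_of_mem_closedConvexHull {A : Set (WeakDual ℝ C(X, ℝ))}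
    (hA : A ⊆ stateSpace X) {x : X} (hx : evalState x ∈ closedConvexHull ℝ A) :
    evalState x ∈ closure A := by
  refine evalState_mem_closure hA fun f _ hfx ε hε => ?_
  by_contra! hAε
  have hsub : closedConvexHull ℝ A ⊆ {φ | ε ≤ φ f} := by
    refine closedConvexHull_min hAε ?_ (isClosed_le continuous_const (WeakDual.eval_continuous f))
    exact convex_halfSpace_ge ⟨fun _ _ => rfl, fun _ _ => rfl⟩ ε
  have : ε ≤ f x := hsub hx
  exact hε.not_ge (hfx ▸ this)

end States

section ProbabilityMeasures

variable {X Z : Type*} [TopologicalSpace X] [CompactSpace X] [MeasurableSpace X] [BorelSpace X]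
  [TopologicalSpace Z] [CompactSpace Z] [MeasurableSpace Z] [BorelSpace Z]

/-- Integration against a probability measure, as a functional on `C(X, ℝ)`. -/
def integrationState (μ : ProbabilityMeasure X) : WeakDual ℝ C(X, ℝ) :=
  StrongDual.toWeakDual <| LinearMap.mkContinuous
    { toFun f := ∫ x, f x ∂(μ : Measure X)
      map_add' f g := integral_add (f.continuous.integrable_of_hasCompactSupport
        (.of_compactSpace f)) (g.continuous.integrable_of_hasCompactSupport (.of_compactSpace g))
      map_smul' c f := integral_const_mul c f } 1 fun f => by
    simpa using norm_integral_le_of_norm_le_const (μ := (μ : Measure X))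
      (.of_forall f.norm_coe_le_norm)

@[simp]
theorem integrationState_apply (μ : ProbabilityMeasure X) (f : C(X, ℝ)) :
    integrationState μ f = ∫ x, f x ∂(μ : Measure X) := rfl

theorem tendsto_integrationState_iff {l : Filter (ProbabilityMeasure X)}
    {μ : ProbabilityMeasure X} :
    l.Tendsto integrationState (nhds (integrationState μ)) ↔ l ≤ nhds μ := by
  rw [← Filter.tendsto_id', ProbabilityMeasure.tendsto_iff_forall_integral_tendsto,
    tendsto_iff_forall_eval_tendsto_topDualPairing]
  exact ⟨fun h f => h f.toContinuousMap, fun h f => h (.mkOfCompact f)⟩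

theorem isInducing_integrationState :
    Topology.IsInducing (integrationState : ProbabilityMeasure X → WeakDual ℝ C(X, ℝ)) :=
  Topology.isInducing_iff_nhds.2 fun _ => eq_of_forall_le_iff fun l => by
    rw [← Filter.map_le_iff_le_comap, ← tendsto_integrationState_iff]; rfl

theorem integrationState_map (μ : ProbabilityMeasure X) (p : C(X, Z)) :
    integrationState (μ.map p.continuous.measurable.aemeasurable) =
      pushforward p (integrationState μ) :=
  DFunLike.ext _ _ fun f =>
    integral_map p.continuous.measurable.aemeasurable f.continuous.aestronglyMeasurable

variable [T2Space X]

theorem integrationState_diracProba (x : X) : integrationState (diracProba x) = evalState x :=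
  DFunLike.ext _ _ fun f => by
    rw [integrationState_apply, evalState_apply, ← integral_dirac f x]; rfl

theorem range_integrationState :
    Set.range (integrationState (X := X)) = stateSpace X := by
  refine Set.Subset.antisymm ?_ fun φ hφ => ?_
  · rintro _ ⟨μ, rfl⟩
    exact ⟨fun f hf => integral_nonneg hf, by simp⟩
  · let Λ : CompactlySupportedContinuousMap X ℝ →ₚ[ℝ] ℝ := PositiveLinearMap.mk₀
      { toFun := fun f => φ f.toContinuousMap
        map_add' := fun f g => map_add φ f.toContinuousMap g.toContinuousMap
        map_smul' := fun c f => map_smul φ c f.toContinuousMap }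
      (fun f hf => hφ.1 _ hf)
    have hΛ (f : C(X, ℝ)) : ∫ x, f x ∂(RealRMK.rieszMeasure Λ) = φ f :=
      RealRMK.integral_rieszMeasure Λ ⟨f, .of_compactSpace f⟩
    have : IsProbabilityMeasure (RealRMK.rieszMeasure Λ) := by
      rw [isProbabilityMeasure_iff_real, ← hφ.2, ← hΛ 1]
      simp
    exact ⟨⟨_, this⟩, DFunLike.ext _ _ hΛ⟩

end ProbabilityMeasures

section PushforwardAction

variable {X : Type*} [TopologicalSpace X] [MulAction G X] [ContinuousConstSMul G X]

/-- The translation `x ↦ g • x` as a bundled continuous map. -/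
def translation (g : G) : C(X, X) := ⟨(g • ·), continuous_const_smul g⟩

/-- The action of `G` on functionals on `C(X, ℝ)`, in particular on probability measures, by
pushforward. -/
abbrev pushforwardAction : DistribMulAction G (WeakDual ℝ C(X, ℝ)) where
  smul g φ := pushforward (X := X) (translation g) φ
  one_smul φ := DFunLike.ext _ _ fun f =>
    congrArg φ (ContinuousMap.ext fun x => congrArg f (one_smul G x))
  mul_smul g h φ := DFunLike.ext _ _ fun f =>
    congrArg φ (ContinuousMap.ext fun x => congrArg f (mul_smul g h x))
  smul_zero g := map_zero (pushforward (translation g))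
  smul_add g := map_add (pushforward (translation g))

end PushforwardAction

attribute [local instance] pushforwardAction

section Boundaries

variable {X : Type*} [TopologicalSpace X] [MulAction G X] [ContinuousConstSMul G X]

theorem smul_state_apply (g : G) (φ : WeakDual ℝ C(X, ℝ)) (f : C(X, ℝ)) :
    (g • φ) f = φ (f.comp (translation g)) := rfl

theorem continuousConstSMul_weakDual : ContinuousConstSMul G (WeakDual ℝ C(X, ℝ)) :=
  ⟨fun g => (pushforward (translation g)).continuous⟩

theorem smulCommClass_weakDual : SMulCommClass G ℝ (WeakDual ℝ C(X, ℝ)) :=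
  ⟨fun g c φ => map_smul (pushforward (translation g)) c φ⟩

theorem smul_evalState (g : G) (x : X) : g • evalState x = evalState (g • x) := rfl

theorem orbit_subset_stateSpace {φ : WeakDual ℝ C(X, ℝ)} (hφ : φ ∈ stateSpace X) :
    MulAction.orbit G φ ⊆ stateSpace X := by
  rintro _ ⟨g, rfl⟩
  exact pushforward_mem_stateSpace _ hφ

theorem isBoundary_iff [CompactSpace X] [T2Space X] :
    IsBoundary G X ↔ Nonempty X ∧ ∀ φ ∈ stateSpace X, ∀ x : X,
      evalState x ∈ closure (MulAction.orbit G φ) := by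
  let : MeasurableSpace X := borel X
  have : BorelSpace X := ⟨rfl⟩
  refine and_congr_right fun _ => ?_
  rw [← range_integrationState, Set.forall_mem_range]
  refine forall₂_congr fun μ x => ?_
  have horbit : integrationState '' {ν : ProbabilityMeasure X | ∃ g : G, ν = μ.map
      ((continuous_const_smul g).measurable.aemeasurable (μ := μ.toMeasure)) (f := (g • ·))} =
      MulAction.orbit G (integrationState μ) := by
    ext φ
    constructor
    · rintro ⟨_, ⟨g, rfl⟩, rfl⟩
      exact ⟨g, (integrationState_map μ (translation g)).symm⟩
    · rintro ⟨g, rfl⟩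
      exact ⟨_, ⟨g, rfl⟩, integrationState_map μ (translation g)⟩
  rw [← horbit, ← integrationState_diracProba,
    ← Set.mem_preimage, ← isInducing_integrationState.closure_eq_preimage_closure_image]
  rfl

end Boundaries

attribute [local instance] continuousConstSMul_weakDual smulCommClass_weakDual

section Barycenters

theorem mem_of_forall_le_weakDual {E : Type*} [AddCommGroup E] [Module ℝ E] [TopologicalSpace E]
    {K : Set (WeakDual ℝ E)} (hK : Convex ℝ K) (hKc : IsClosed K) {φ : WeakDual ℝ E}
    (h : ∀ (e : E) (u : ℝ), (∀ m ∈ K, m e ≤ u) → φ e ≤ u) : φ ∈ K := by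
  by_contra hφ
  have : LocallyConvexSpace ℝ (WeakDual ℝ E) :=
    inferInstanceAs (LocallyConvexSpace ℝ (WeakBilin (topDualPairing ℝ E)))
  obtain ⟨F, u, hFK, hFφ⟩ := geometric_hahn_banach_closed_point hK hKc hφ
  obtain ⟨e, rfl⟩ := LinearMap.dualEmbedding_surjective (topDualPairing ℝ E) F
  exact (h e u fun m hm => (hFK m hm).le).not_gt hFφ

/-- The map `e ↦ (s ↦ j s e)` from `E` to continuous functions attached to a uniformly bounded
weak*-continuous family `j` of functionals on `E`. -/
def evalFamily {𝕜 E S : Type*} [RCLike 𝕜] [SeminormedAddCommGroup E] [NormedSpace 𝕜 E]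
    [TopologicalSpace S] [CompactSpace S] (j : C(S, WeakDual 𝕜 E)) (hj : ∀ s e, ‖j s e‖ ≤ ‖e‖) :
    E →L[𝕜] C(S, 𝕜) :=
  LinearMap.mkContinuous
    { toFun e := ⟨fun s => j s e, (WeakDual.eval_continuous e).comp j.continuous⟩
      map_add' e e' := ContinuousMap.ext fun s => map_add (j s) e e'
      map_smul' c e := ContinuousMap.ext fun s => map_smul (j s) c e } 1 fun e => by
    rw [one_mul, ContinuousMap.norm_le _ (norm_nonneg e)]
    exact fun s => hj s e

@[simp]
theorem evalFamily_apply {𝕜 E S : Type*} [RCLike 𝕜] [SeminormedAddCommGroup E] [NormedSpace 𝕜 E]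
    [TopologicalSpace S] [CompactSpace S] (j : C(S, WeakDual 𝕜 E)) (hj : ∀ s e, ‖j s e‖ ≤ ‖e‖)
    (e : E) (s : S) : evalFamily j hj e s = j s e := rfl

variable {E S : Type*} [SeminormedAddCommGroup E] [NormedSpace ℝ E] [TopologicalSpace S]
  [CompactSpace S] {j : C(S, WeakDual ℝ E)} {hj : ∀ s e, ‖j s e‖ ≤ ‖e‖}
  {K : Set (WeakDual ℝ E)} {φ : WeakDual ℝ C(S, ℝ)}

variable (j hj) in
/-- The barycenter of a measure on `S`, viewed inside a dual space through `j`. -/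
def barycenter : WeakDual ℝ C(S, ℝ) →L[ℝ] WeakDual ℝ E := dualMap (evalFamily j hj)

theorem barycenter_apply (φ : WeakDual ℝ C(S, ℝ)) (e : E) :
    barycenter j hj φ e = φ (evalFamily j hj e) := rfl

theorem barycenter_mem (hK : Convex ℝ K) (hKc : IsClosed K) (hjK : ∀ s, j s ∈ K)
    (hφ : φ ∈ stateSpace S) : barycenter j hj φ ∈ K := by
  refine mem_of_forall_le_weakDual hK hKc fun e u hu => ?_
  calc φ (evalFamily j hj e) ≤ φ (u • 1) := state_mono hφ fun s => by
        simpa using hu _ (hjK s)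
    _ = u := by rw [map_smul, hφ.2, smul_eq_mul, mul_one]

/-- The functional with density `h` relative to `φ`. -/
def withDensityState (φ : WeakDual ℝ C(S, ℝ)) (h : C(S, ℝ)) : WeakDual ℝ C(S, ℝ) :=
  dualMap (ContinuousLinearMap.mul ℝ C(S, ℝ) h) φ

theorem inv_smul_withDensityState_mem (hφ : φ ∈ stateSpace S) {h : C(S, ℝ)} (hh : 0 ≤ h)
    (hφh : 0 < φ h) : (φ h)⁻¹ • withDensityState φ h ∈ stateSpace S := by
  refine ⟨fun f hf => ?_, ?_⟩
  · exact mul_nonneg (inv_nonneg.2 hφh.le) (hφ.1 _ (mul_nonneg hh hf))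
  · change (φ h)⁻¹ * φ (h * 1) = 1
    rw [mul_one, inv_mul_cancel₀ hφh.ne']

/-- A state is a convex combination of its normalizations by the densities `1 + k` and `1 - k`;
extremality of the barycenter forces both to have that same barycenter. -/
theorem state_mul_evalFamily_of_norm_lt_one (hK : Convex ℝ K) (hKc : IsClosed K)
    (hjK : ∀ s, j s ∈ K) (hφ : φ ∈ stateSpace S)
    (hext : barycenter j hj φ ∈ K.extremePoints ℝ) {k : C(S, ℝ)} (hk : ‖k‖ < 1) (e : E) :
    φ (k * evalFamily j hj e) = φ k * φ (evalFamily j hj e) := by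
  set b := barycenter j hj
  have hks : ∀ s, |k s| < 1 := fun s => (k.norm_coe_le_norm s).trans_lt hk
  obtain ⟨hlt, hgt⟩ := abs_lt.1 ((abs_state_le_norm hφ k).trans_lt hk)
  have hadd_pos : 0 < 1 + φ k := by linarith
  have hsub_pos : 0 < 1 - φ k := by linarith
  have hadd : φ (1 + k) = 1 + φ k := by rw [map_add, hφ.2]
  have hsub : φ (1 - k) = 1 - φ k := by rw [map_sub, hφ.2]
  have hψ₁ := inv_smul_withDensityState_mem hφ (h := 1 + k)
    (fun s => by have := (abs_lt.1 (hks s)).1; simp; linarith) (hadd ▸ hadd_pos)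
  have hψ₂ := inv_smul_withDensityState_mem hφ (h := 1 - k)
    (fun s => by have := (abs_lt.1 (hks s)).2; simp; linarith) (hsub ▸ hsub_pos)
  set ψ₁ := (φ (1 + k))⁻¹ • withDensityState φ (1 + k)
  set ψ₂ := (φ (1 - k))⁻¹ • withDensityState φ (1 - k)
  have hmem : b φ ∈ openSegment ℝ (b ψ₁) (b ψ₂) := by
    refine ⟨(1 + φ k) / 2, (1 - φ k) / 2, half_pos hadd_pos, half_pos hsub_pos, by ring, ?_⟩
    rw [← map_smul, ← map_smul, ← map_add]
    congr 1
    refine DFunLike.ext _ _ fun f => ?_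
    change (1 + φ k) / 2 * ((φ (1 + k))⁻¹ * φ ((1 + k) * f)) +
      (1 - φ k) / 2 * ((φ (1 - k))⁻¹ * φ ((1 - k) * f)) = φ f
    rw [hadd, hsub, add_mul, sub_mul, one_mul, map_add, map_sub]
    field_simp
    ring
  have hψb : b ψ₁ = b φ := (mem_extremePoints.1 hext).2 _ (barycenter_mem hK hKc hjK hψ₁) _
    (barycenter_mem hK hKc hjK hψ₂) hmem |>.1
  have hψe : (φ (1 + k))⁻¹ * φ ((1 + k) * evalFamily j hj e) = φ (evalFamily j hj e) :=
    DFunLike.congr_fun hψb e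
  rw [inv_mul_eq_iff_eq_mul₀ (hadd ▸ hadd_pos.ne'), hadd, add_mul, one_mul, map_add] at hψe
  linarith

theorem state_mul_evalFamily (hK : Convex ℝ K) (hKc : IsClosed K)
    (hjK : ∀ s, j s ∈ K) (hφ : φ ∈ stateSpace S)
    (hext : barycenter j hj φ ∈ K.extremePoints ℝ) (k : C(S, ℝ)) (e : E) :
    φ (k * evalFamily j hj e) = φ k * φ (evalFamily j hj e) := by
  have hpos : 0 < ‖k‖ + 1 := by positivity
  have hk : ‖(‖k‖ + 1)⁻¹ • k‖ < 1 := by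
    rw [norm_smul, norm_inv, Real.norm_of_nonneg hpos.le, inv_mul_lt_one₀ hpos]
    exact lt_add_one _
  have := state_mul_evalFamily_of_norm_lt_one hK hKc hjK hφ hext hk e
  rw [smul_mul_assoc, map_smul, map_smul, smul_eq_mul, smul_eq_mul, mul_assoc] at this
  exact mul_left_cancel₀ (inv_ne_zero hpos.ne') this

theorem eq_evalState_of_separatesPoints (hφ : φ 1 = 1) {s : S} {A : Set C(S, ℝ)}
    (hA : (DFunLike.coe '' A : Set (S → ℝ)).SeparatesPoints)
    (h : ∀ f ∈ A, ∀ k, φ (k * f) = φ k * f s) : φ = evalState s := by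
  let B : Subalgebra ℝ C(S, ℝ) :=
    { carrier := {f | ∀ k, φ (k * f) = φ k * f s}
      mul_mem' := fun {f g} hf hg k => by
        rw [← mul_assoc, hg, hf, ContinuousMap.mul_apply, mul_assoc]
      add_mem' := fun {f g} hf hg k => by
        rw [mul_add, map_add, hf, hg, ContinuousMap.add_apply, mul_add]
      algebraMap_mem' := fun r k => by
        rw [Algebra.algebraMap_eq_smul_one, mul_smul_comm, mul_one, map_smul]
        simp [mul_comm] }
  have hBc : IsClosed (B : Set C(S, ℝ)) := by
    have : (B : Set C(S, ℝ)) = ⋂ k, {f | φ (k * f) = φ k * f s} := by ext; simp [B]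
    rw [this]
    refine isClosed_iInter fun k => isClosed_eq ?_ ?_
    · exact (WeakDual.toStrongDual φ).continuous.comp (continuous_const.mul continuous_id)
    · exact continuous_const.mul (continuous_eval_const s)
  have hB : B = ⊤ := by
    rw [← ContinuousMap.subalgebra_topologicalClosure_eq_top_of_separatesPoints B]
    · exact SetLike.coe_injective hBc.closure_eq.symm
    · exact fun _ _ hst => (hA hst).imp fun _ hf => ⟨Set.image_mono h hf.1, hf.2⟩
  refine DFunLike.ext _ _ fun f => ?_
  have hf : f ∈ B := hB ▸ Algebra.mem_top
  simpa [hφ] using hf 1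

/-- Bauer's characterization of extreme points: the only representing measure is the point
mass. -/
theorem eq_evalState_of_barycenter_mem_extremePoints (hK : Convex ℝ K) (hKc : IsClosed K)
    (hjK : ∀ s, j s ∈ K) (hj' : Function.Injective j) (hφ : φ ∈ stateSpace S) {s : S}
    (hs : barycenter j hj φ = j s) (hext : j s ∈ K.extremePoints ℝ) :
    φ = evalState s := by
  refine eq_evalState_of_separatesPoints hφ.2 (A := Set.range (evalFamily j hj)) ?_ ?_
  · intro s t hst
    obtain ⟨e, he⟩ := DFunLike.ne_iff.1 (hj'.ne hst)
    exact ⟨_, ⟨_, ⟨e, rfl⟩, rfl⟩, he⟩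
  · rintro _ ⟨e, rfl⟩ k
    rw [state_mul_evalFamily hK hKc hjK hφ (hs ▸ hext), evalFamily_apply, ← hs, barycenter_apply]

end Barycenters

section InvariantSets

variable {V W : Type*} [AddCommGroup V] [Module ℝ V] [TopologicalSpace V] [DistribMulAction G V]
  [AddCommGroup W] [Module ℝ W] [TopologicalSpace W] [DistribMulAction G W]

variable (G) in
/-- Nonempty compact convex `G`-invariant sets: the affine dynamical systems whose minimal members
carry the boundaries of `G`. -/
structure IsInvariantCompactConvex (K : Set V) : Prop where
  nonempty : K.Nonempty
  isCompact : IsCompact K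
  convex : Convex ℝ K
  smul_mem : ∀ (g : G), ∀ m ∈ K, g • m ∈ K

namespace IsInvariantCompactConvex

variable {K : Set V}

theorem sInter [T2Space V] {c : Set (Set V)} (hne : c.Nonempty) (hchain : IsChain (· ⊆ ·) c)
    (hc : ∀ K ∈ c, IsInvariantCompactConvex G K) : IsInvariantCompactConvex G (⋂₀ c) where
  nonempty := by
    have : Nonempty c := hne.to_subtype
    exact IsCompact.nonempty_sInter_of_directed_nonempty_isCompact_isClosed
      (fun s hs t ht => (hchain.total hs ht).elim (fun h => ⟨s, hs, subset_rfl, h⟩)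
        fun h => ⟨t, ht, h, subset_rfl⟩) (fun K hK => (hc K hK).nonempty)
      (fun K hK => (hc K hK).isCompact)
      (fun K hK => (hc K hK).isCompact.isClosed)
  isCompact := by
    obtain ⟨K, hK⟩ := hne
    exact (hc K hK).isCompact.of_isClosed_subset
      (isClosed_sInter fun L hL => (hc L hL).isCompact.isClosed) (Set.sInter_subset_of_mem hK)
  convex := convex_sInter fun K hK => (hc K hK).convex
  smul_mem g m hm K hK := (hc K hK).smul_mem g m (hm K hK)

theorem exists_minimal [T2Space V] (hK : IsInvariantCompactConvex G K) :
    ∃ M ⊆ K, Minimal (IsInvariantCompactConvex G) M :=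
  zorn_superset_nonempty {L | IsInvariantCompactConvex G L}
    (fun c hc hchain hne => ⟨⋂₀ c, sInter hne hchain hc, fun _ => Set.sInter_subset_of_mem⟩) K hK

theorem image (hK : IsInvariantCompactConvex G K) (T : V →L[ℝ] W)
    (hT : ∀ (g : G) v, T (g • v) = g • T v) : IsInvariantCompactConvex G (T '' K) where
  nonempty := hK.nonempty.image T
  isCompact := hK.isCompact.image T.continuous
  convex := hK.convex.linear_image T.toLinearMap
  smul_mem := by
    rintro g _ ⟨m, hm, rfl⟩
    exact ⟨g • m, hK.smul_mem g m hm, hT g m⟩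

variable [SMulCommClass G ℝ V]

theorem smul_mem_extremePoints (hK : IsInvariantCompactConvex G K) (g : G) {m : V}
    (hm : m ∈ K.extremePoints ℝ) : g • m ∈ K.extremePoints ℝ := by
  let L := DistribMulAction.toLinearEquiv ℝ V g
  have hL : L '' K = K := by
    refine (Set.image_subset_iff.2 (hK.smul_mem g)).antisymm fun v hv => ?_
    exact ⟨g⁻¹ • v, hK.smul_mem _ v hv, smul_inv_smul g v⟩
  have := Set.mem_image_of_mem L hm
  rwa [image_extremePoints, hL] at this

/-- The closure of the set of extreme points, as a `G`-space. -/
def extremeClosure [ContinuousConstSMul G V] (hK : IsInvariantCompactConvex G K) :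
    SubMulAction G V where
  carrier := closure (K.extremePoints ℝ)
  smul_mem' g _ hv := map_mem_closure (continuous_const_smul g) hv
    fun _ => hK.smul_mem_extremePoints g

variable [ContinuousConstSMul G V] (hK : IsInvariantCompactConvex G K)

theorem extremeClosure_subset [T2Space V] : (hK.extremeClosure : Set V) ⊆ K :=
  closure_minimal extremePoints_subset hK.isCompact.isClosed

instance [T2Space V] : CompactSpace hK.extremeClosure :=
  isCompact_iff_compactSpace.1
    (hK.isCompact.of_isClosed_subset isClosed_closure hK.extremeClosure_subset)

instance : ContinuousConstSMul G hK.extremeClosure :=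
  Topology.IsInducing.subtypeVal.continuousConstSMul id rfl

theorem dense_extremePoints :
    Dense {x : hK.extremeClosure | (x : V) ∈ K.extremePoints ℝ} := by
  refine Subtype.dense_iff.2 fun v hv => closure_mono (fun w hw => ?_) hv
  exact ⟨⟨w, subset_closure hw⟩, hw, rfl⟩

theorem nonempty_extremeClosure [T2Space V] [IsTopologicalAddGroup V] [ContinuousSMul ℝ V]
    [LocallyConvexSpace ℝ V] : Nonempty hK.extremeClosure :=
  (hK.isCompact.extremePoints_nonempty hK.nonempty).closure.to_subtype

end IsInvariantCompactConvex

end InvariantSets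

section AffineDynamics

variable {Z : Type*} [TopologicalSpace Z] [CompactSpace Z] [MulAction G Z]
  [ContinuousConstSMul G Z]

theorem isInvariantCompactConvex_stateSpace [Nonempty Z] :
    IsInvariantCompactConvex G (stateSpace Z) where
  nonempty := ⟨_, evalState_mem_stateSpace (Classical.arbitrary Z)⟩
  isCompact := isCompact_stateSpace
  convex := convex_stateSpace
  smul_mem _ _ hφ := pushforward_mem_stateSpace _ hφ

theorem isInvariantCompactConvex_closedConvexHull_orbit {φ : WeakDual ℝ C(Z, ℝ)}
    (hφ : φ ∈ stateSpace Z) :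
    IsInvariantCompactConvex G (closedConvexHull ℝ (MulAction.orbit G φ)) where
  nonempty := ⟨φ, subset_closedConvexHull (MulAction.mem_orbit_self φ)⟩
  isCompact := isCompact_stateSpace.of_isClosed_subset isClosed_closedConvexHull
    (closedConvexHull_min (orbit_subset_stateSpace hφ) convex_stateSpace isClosed_stateSpace)
  convex := convex_closedConvexHull
  smul_mem g := by
    refine closedConvexHull_min (t := (g • ·) ⁻¹' _) ?_ ?_ ?_
    · exact fun ψ hψ => subset_closedConvexHull (MulAction.mem_orbit_of_mem_orbit g hψ)
    · exact convex_closedConvexHull.linear_preimage (DistribSMul.toLinearMap ℝ _ g)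
    · exact isClosed_closedConvexHull.preimage (continuous_const_smul g)

variable {S : Type*} [TopologicalSpace S] [CompactSpace S] [MulAction G S]
  [ContinuousConstSMul G S]

theorem barycenter_smul {j : C(S, WeakDual ℝ C(Z, ℝ))} {hj : ∀ s f, ‖j s f‖ ≤ ‖f‖}
    (hG : ∀ (g : G) s, j (g • s) = g • j s) (g : G) (φ : WeakDual ℝ C(S, ℝ)) :
    barycenter j hj (g • φ) = g • barycenter j hj φ :=
  DFunLike.ext _ _ fun f => congrArg φ <| ContinuousMap.ext fun s =>
    DFunLike.congr_fun (hG g s) f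

/-- Glasner's theorem. The closed convex hull of the orbit of a measure on the closure of the
extreme points has all of `M` as its set of barycenters, by minimality; extreme points have only
their point mass as representing measure, and Milman's theorem places it in the orbit closure. -/
theorem isBoundary_extremeClosure {M : Set (WeakDual ℝ C(Z, ℝ))}
    (hM : Minimal (IsInvariantCompactConvex G) M) (hMs : M ⊆ stateSpace Z) :
    IsBoundary G hM.prop.extremeClosure := by
  refine isBoundary_iff.2 ⟨?_, fun φ hφ => ?_⟩
  · have : LocallyConvexSpace ℝ (WeakDual ℝ C(Z, ℝ)) :=
      inferInstanceAs (LocallyConvexSpace ℝ (WeakBilin (topDualPairing ℝ _)))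
    exact hM.prop.nonempty_extremeClosure
  let X := hM.prop.extremeClosure
  let j : C(X, WeakDual ℝ C(Z, ℝ)) := ⟨Subtype.val, continuous_subtype_val⟩
  have hjM : ∀ x, j x ∈ M := fun x => hM.prop.extremeClosure_subset x.2
  have hj : ∀ x f, ‖j x f‖ ≤ ‖f‖ := fun x => abs_state_le_norm (hMs (hjM x))
  have hMc : IsClosed M := hM.prop.isCompact.isClosed
  set C := closedConvexHull ℝ (MulAction.orbit G φ)
  have hCs : C ⊆ stateSpace X :=
    closedConvexHull_min (orbit_subset_stateSpace hφ) convex_stateSpace isClosed_stateSpace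
  have hC : barycenter j hj '' C = M := hM.eq_of_subset
    ((isInvariantCompactConvex_closedConvexHull_orbit hφ).image _
      (barycenter_smul fun _ _ => rfl))
    (Set.image_subset_iff.2 fun ψ hψ => barycenter_mem hM.prop.convex hMc hjM (hCs hψ))
  have hext : ∀ x ∈ {x : X | (x : WeakDual ℝ C(Z, ℝ)) ∈ M.extremePoints ℝ},
      evalState x ∈ closure (MulAction.orbit G φ) := by
    intro x hx
    obtain ⟨ψ, hψC, hψx⟩ := hC.symm.subset (hjM x)
    have hψ : ψ = evalState x := eq_evalState_of_barycenter_mem_extremePoints hM.prop.convex hMc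
      hjM Subtype.val_injective (hCs hψC) hψx hx
    exact evalState_mem_closure_of_mem_closedConvexHull (orbit_subset_stateSpace hφ) (hψ ▸ hψC)
  exact fun x => (isClosed_closure.preimage continuous_evalState).closure_subset_iff.2 hext
    (hM.prop.dense_extremePoints x)

end AffineDynamics

section FurstenbergBoundary

variable {G Y Z : Type u} [Group G] [TopologicalSpace Y] [CompactSpace Y] [T2Space Y]
  [MulAction G Y] [ContinuousConstSMul G Y] [TopologicalSpace Z] [CompactSpace Z] [MulAction G Z]
  [ContinuousConstSMul G Z]

theorem exists_equivariant_map_to_states [Nonempty Z] (hY : IsFurstenberg G Y) :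
    ∃ q : C(Y, WeakDual ℝ C(Z, ℝ)), (∀ y, q y ∈ stateSpace Z) ∧
      ∀ (g : G) y, q (g • y) = g • q y := by
  obtain ⟨M, hMs, hM⟩ := (isInvariantCompactConvex_stateSpace (G := G) (Z := Z)).exists_minimal
  obtain ⟨q, hq, -, hqG⟩ := hY.2 _ _ _ _ _ _ (isBoundary_extremeClosure hM hMs)
  exact ⟨⟨fun y => q y, continuous_subtype_val.comp hq⟩,
    fun y => hMs (hM.prop.extremeClosure_subset (q y).2), fun g y => congrArg Subtype.val (hqG g y)⟩

/-- The trick is to apply the boundary property to the average of `evalState y` and `q y`. -/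
theorem eq_evalState_of_equivariant (hY : IsBoundary G Y) (q : C(Y, WeakDual ℝ C(Y, ℝ)))
    (hq : ∀ y, q y ∈ stateSpace Y) (hqG : ∀ (g : G) y, q (g • y) = g • q y) (y : Y) :
    q y = evalState y := by
  let Ψ : Y → WeakDual ℝ C(Y, ℝ) := fun z => (1 / 2 : ℝ) • evalState z + (1 / 2 : ℝ) • q z
  have hΨ : Continuous Ψ :=
    (continuous_evalState.const_smul (1 / 2 : ℝ)).add (q.continuous.const_smul (1 / 2 : ℝ))
  have hΨs : Ψ y ∈ stateSpace Y := convex_stateSpace (evalState_mem_stateSpace y) (hq y)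
    one_half_pos.le one_half_pos.le (add_halves 1)
  have horbit : MulAction.orbit G (Ψ y) ⊆ Set.range Ψ := by
    rintro _ ⟨g, rfl⟩
    refine ⟨g • y, ?_⟩
    simp only [Ψ, hqG, ← smul_evalState, smul_add, smul_comm g (1 / 2 : ℝ)]
  obtain ⟨z, hz⟩ : evalState y ∈ Set.range Ψ :=
    closure_minimal horbit (isCompact_range hΨ).isClosed ((isBoundary_iff.1 hY).2 _ hΨs y)
  have hzf : ∀ f : C(Y, ℝ), 1 / 2 * f z + 1 / 2 * q z f = f y := fun f => DFunLike.congr_fun hz f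
  obtain rfl : z = y := by
    by_contra hzy
    obtain ⟨f, hf₀, hf₁, hf⟩ := exists_continuous_zero_one_of_isClosed
      (isClosed_singleton (x := y)) (isClosed_singleton (x := z)) (by simpa using Ne.symm hzy)
    have hqf := (hq z).1 f fun x => (hf x).1
    have := hzf f
    rw [hf₀ rfl, hf₁ rfl, Pi.zero_apply, Pi.one_apply] at this
    linarith
  refine DFunLike.ext _ _ fun f => ?_
  rw [evalState_apply]
  linarith [hzf f]

end FurstenbergBoundary

section ExtremallyDisconnected

theorem extremallyDisconnected_ultrafilter (α : Type*) :
    ExtremallyDisconnected (Ultrafilter α) := by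
  refine CompactT2.Projective.extremallyDisconnected ?_
  intro W Z _ _ _ _ _ _ f g hf hg hsurj
  let t : α → W := Function.surjInv hsurj ∘ f ∘ pure
  refine ⟨Ultrafilter.extend t, continuous_ultrafilter_extend t, ?_⟩
  refine denseRange_pure.equalizer (hg.comp (continuous_ultrafilter_extend t)) hf ?_
  rw [Function.comp_assoc, ultrafilter_extend_extends, ← Function.comp_assoc,
    (Function.rightInverse_surjInv hsurj).comp_eq_id, Function.id_comp]

/-- Since measures on an extremally disconnected space integrate indicators of closures of open
sets, a weak*-continuous choice of measures on the fibres of `p` transports extremal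
disconnectedness to the base. -/
theorem extremallyDisconnected_of_pushforward_eq_evalState {Y Z : Type*} [TopologicalSpace Y]
    [CompletelyRegularSpace Y] [TopologicalSpace Z] [ExtremallyDisconnected Z] (p : C(Z, Y))
    (q : C(Y, WeakDual ℝ C(Z, ℝ))) (hq : ∀ y, q y ∈ stateSpace Z)
    (hpq : ∀ y, pushforward p (q y) = evalState y) : ExtremallyDisconnected Y := by
  refine ⟨fun U hU => ?_⟩
  set V := closure (p ⁻¹' U)
  have hV : IsClopen V :=
    ⟨isClosed_closure, ExtremallyDisconnected.open_closure _ (hU.preimage p.continuous)⟩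
  let k : C(Z, ℝ) := ⟨V.indicator 1, hV.continuous_indicator continuous_one⟩
  have hk : Continuous fun y => q y k := (WeakDual.eval_continuous k).comp q.continuous
  have h_one_le : closure U ⊆ {y | 1 ≤ q y k} := by
    refine closure_minimal (fun y hy => ?_) (isClosed_le continuous_const hk)
    obtain ⟨f, hf, hfy, hfU⟩ := CompletelyRegularSpace.completely_regular y Uᶜ hU.isClosed_compl
      (Set.notMem_compl_iff.2 hy)
    let g : C(Y, ℝ) := ⟨fun z => 1 - f z, by fun_prop⟩
    have hgk : g.comp p ≤ k := fun z => by
      by_cases hz : p z ∈ U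
      · have hzV : z ∈ V := subset_closure hz
        simpa [g, k, hzV] using (f (p z)).2.1
      · have hVz : (0 : ℝ) ≤ V.indicator 1 z := Set.indicator_nonneg (fun _ _ => zero_le_one) z
        simpa [g, k, hfU hz] using hVz
    calc (1 : ℝ) = pushforward p (q y) g := by simp [hpq, g, hfy]
      _ ≤ q y k := state_mono (hq y) hgk
  have h_le_zero : ∀ y ∉ closure U, q y k ≤ 0 := fun y hy => by
    obtain ⟨f, hf, hfy, hfU⟩ :=
      CompletelyRegularSpace.completely_regular y _ isClosed_closure hy
    let g : C(Y, ℝ) := ⟨fun z => f z, by fun_prop⟩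
    have hkg : k ≤ g.comp p := fun z => by
      by_cases hz : z ∈ V
      · have hzU : p z ∈ closure U :=
          p.continuous.closure_preimage_subset U hz
        simp [g, k, hz, hfU hzU]
      · simpa [g, k, hz] using (f (p z)).2.1
    calc q y k ≤ pushforward p (q y) g := state_mono (hq y) hkg
      _ = 0 := by simp [hpq, g, hfy]
  have hUeq : closure U = {y | 0 < q y k} := Set.Subset.antisymm
    (fun y hy => zero_lt_one.trans_le (α := ℝ) (h_one_le hy))
    fun y hy => by_contra fun hyU => (h_le_zero y hyU).not_gt hy
  exact hUeq ▸ isOpen_lt continuous_const hk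

variable {Y : Type*} [TopologicalSpace Y]

theorem exists_maximal_isOpen_disjoint_preimage (s : Y → Y) :
    ∃ U, Maximal (fun U => IsOpen U ∧ Disjoint U (s ⁻¹' U)) U := by
  refine zorn_subset {U | IsOpen U ∧ Disjoint U (s ⁻¹' U)} fun c hc hchain =>
    ⟨⋃₀ c, ⟨isOpen_sUnion fun t ht => (hc ht).1, ?_⟩, fun t => Set.subset_sUnion_of_mem⟩
  rw [Set.disjoint_left]
  rintro x ⟨t, ht, hxt⟩ ⟨t', ht', hxt'⟩
  obtain ⟨w, hw, htw, htw'⟩ := hchain.directedOn t ht t' ht'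
  exact Set.disjoint_left.1 (hc hw).2 (htw hxt) (htw' hxt')

/-- Frolík's theorem. A maximal open set disjoint from its preimage is clopen, and every point
outside the union of this set and its two translates is fixed. -/
theorem isClopen_fixedPoints_homeomorph [T2Space Y] [ExtremallyDisconnected Y] (s : Y ≃ₜ Y) :
    IsClopen {x | s x = x} := by
  refine ⟨isClosed_eq s.continuous continuous_id, ?_⟩
  obtain ⟨U, hU⟩ := exists_maximal_isOpen_disjoint_preimage s
  have hUo : IsOpen U := hU.prop.1
  have hUs : ∀ x ∈ U, s x ∉ U := fun _ hx => Set.disjoint_left.1 hU.prop.2 hx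
  have hUc : IsClosed U := by
    have hcl : IsOpen (closure U) := ExtremallyDisconnected.open_closure U hUo
    refine closure_subset_iff_isClosed.1 (hU.le_of_ge ⟨hcl, ?_⟩ subset_closure)
    rw [s.preimage_closure]
    exact (hU.prop.2.closure_left (hUo.preimage s.continuous)).closure_right hcl
  set F := U ∪ s ⁻¹' U ∪ s.symm ⁻¹' U
  have hF : IsClosed F :=
    (hUc.union (hUc.preimage s.continuous)).union (hUc.preimage s.symm.continuous)
  suffices {x | s x = x} = Fᶜ from this ▸ hF.isOpen_compl
  ext x
  constructor
  · rintro (hx : s x = x) hxF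
    have hx' : s.symm x = x := s.symm_apply_eq.2 hx.symm
    have hxU : x ∈ U := by simpa [F, hx, hx'] using hxF
    exact hUs x hxU (hx.symm ▸ hxU)
  · intro hxF
    by_contra hne
    obtain ⟨V, W, hV, hW, hxV, hxW, hVW⟩ := t2_separation hne
    set W' := W ∩ s ⁻¹' V ∩ Fᶜ
    have hmem : IsOpen (U ∪ W') ∧ Disjoint (U ∪ W') (s ⁻¹' (U ∪ W')) := by
      refine ⟨hUo.union ((hW.inter (hV.preimage s.continuous)).inter hF.isOpen_compl),
        Set.disjoint_left.2 ?_⟩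
      rintro z (hz | hz) (hz' | hz')
      · exact hUs z hz hz'
      · exact hz'.2 (.inr (by simpa using hz))
      · exact hz.2 (.inl (.inr hz'))
      · exact Set.disjoint_left.1 hVW hz.1.2 hz'.1.1
    have hxU : x ∈ U := hU.le_of_ge hmem Set.subset_union_left (.inr ⟨⟨hxW, hxV⟩, hxF⟩)
    exact hxF (.inl (.inl hxU))

end ExtremallyDisconnected

section UltrafilterAction

variable {α β : Type*}

theorem continuous_ultrafilter_map (f : α → β) : Continuous (Ultrafilter.map f) :=
  continuous_generateFrom_iff.2 <| by
    rintro _ ⟨s, rfl⟩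
    exact ultrafilter_isOpen_basic (f ⁻¹' s)

variable [MulAction G α]

/-- The extension of an action on a discrete space to its Stone–Čech compactification, realised as
the space of ultrafilters. -/
abbrev ultrafilterAction : MulAction G (Ultrafilter α) where
  smul g := Ultrafilter.map (g • ·)
  one_smul U := by
    change U.map (fun a => (1 : G) • a) = U
    simp
  mul_smul g h U := by
    change U.map (fun a => (g * h) • a) = (U.map (h • ·)).map (g • ·)
    simp [Ultrafilter.map_map, Function.comp_def, mul_smul]

end UltrafilterAction

attribute [local instance] ultrafilterAction

section StoneCech

variable {α : Type*} [MulAction G α]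

theorem smul_pure (g : G) (a : α) : g • (pure a : Ultrafilter α) = pure (g • a) :=
  Ultrafilter.map_pure _ _

theorem continuousConstSMul_ultrafilter : ContinuousConstSMul G (Ultrafilter α) :=
  ⟨fun g => continuous_ultrafilter_map (g • ·)⟩

end StoneCech

attribute [local instance] continuousConstSMul_ultrafilter

section FurstenbergFixedPoints

variable {G Y : Type u} [Group G] [TopologicalSpace Y] [CompactSpace Y] [T2Space Y]
  [MulAction G Y] [ContinuousConstSMul G Y]

/-- The extension to the ultrafilters on `G` of the orbit map of `y`. -/
def orbitExtension (y : Y) : C(Ultrafilter G, Y) :=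
  ⟨Ultrafilter.extend (· • y), continuous_ultrafilter_extend _⟩

theorem orbitExtension_smul (y : Y) (g : G) (U : Ultrafilter G) :
    orbitExtension y (g • U) = g • orbitExtension y U := by
  have hpure (t : G) : orbitExtension y (pure t) = t • y :=
    congrFun (ultrafilter_extend_extends (· • y)) t
  have hcomp : (fun U => orbitExtension y (g • U)) ∘ (pure : G → Ultrafilter G) =
      (fun U => g • orbitExtension y U) ∘ pure := funext fun t => by
    simp only [Function.comp_apply, smul_pure, hpure, smul_eq_mul, mul_smul]
  exact congrFun (denseRange_pure.equalizer
    ((map_continuous _).comp (continuous_const_smul g))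
    ((continuous_const_smul g).comp (map_continuous _)) hcomp) U

theorem IsFurstenberg.extremallyDisconnected (hY : IsFurstenberg G Y) :
    ExtremallyDisconnected Y := by
  obtain ⟨q, hq, hqG⟩ := exists_equivariant_map_to_states (Z := Ultrafilter G) hY
  let p : C(Ultrafilter G, Y) := orbitExtension hY.1.1.some
  have := extremallyDisconnected_ultrafilter G
  refine extremallyDisconnected_of_pushforward_eq_evalState p q hq fun y => ?_
  refine eq_evalState_of_equivariant hY.1 ⟨fun y => pushforward p (q y), by fun_prop⟩
    (fun y => pushforward_mem_stateSpace p (hq y)) (fun g y => ?_) y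
  refine DFunLike.ext _ _ fun f => ?_
  have hp : (f.comp p).comp (translation g) = (f.comp (translation g)).comp p :=
    ContinuousMap.ext fun U => congrArg f (orbitExtension_smul _ g U)
  simp only [ContinuousMap.coe_mk, hqG, smul_state_apply, pushforward_apply, hp]

theorem IsFurstenberg.isClopen_fixedPoints (hY : IsFurstenberg G Y) (s : G) :
    IsClopen {y : Y | s • y = y} :=
  have := hY.extremallyDisconnected
  isClopen_fixedPoints_homeomorph (Homeomorph.smul s)

end FurstenbergFixedPoints

section InvariantMeans

variable {α : Type*}

theorem exists_extension_ultrafilter {f : α → ℝ} {C : ℝ} (hf : ∀ t, |f t| ≤ C) :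
    ∃ F : C(Ultrafilter α, ℝ), ∀ t, F (pure t) = f t := by
  let f' : α → Set.Icc (-C) C := fun t => ⟨f t, abs_le.1 (hf t)⟩
  exact ⟨⟨fun U => (Ultrafilter.extend f' U).1,
      continuous_subtype_val.comp (continuous_ultrafilter_extend f')⟩,
    fun t => congrArg Subtype.val (congrFun (ultrafilter_extend_extends f') t)⟩

theorem le_of_forall_pure_le {F F' : C(Ultrafilter α, ℝ)}
    (h : ∀ t, F (pure t) ≤ F' (pure t)) : F ≤ F' := fun U =>
  denseRange_pure.induction_on U (isClosed_le F.continuous F'.continuous) h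

variable [MulAction G α]

variable (G α) in
/-- The `G`-set `α` carries an invariant mean. Means on `ℓ^∞(α)` are encoded as states on the
Stone–Čech compactification of `α`. -/
def HasInvariantMean : Prop :=
  ∃ φ ∈ stateSpace (Ultrafilter α), ∀ g : G, g • φ = φ

theorem HasInvariantMean.of_equivariant {β : Type*} [MulAction G β] (hα : HasInvariantMean G α)
    (r : α → β) (hr : ∀ (g : G) t, r (g • t) = g • r t) : HasInvariantMean G β := by
  obtain ⟨φ, hφ, hφG⟩ := hα
  let p : C(Ultrafilter α, Ultrafilter β) := ⟨Ultrafilter.map r, continuous_ultrafilter_map r⟩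
  refine ⟨pushforward p φ, pushforward_mem_stateSpace p hφ, fun g => ?_⟩
  have hp : (translation g).comp p = p.comp (translation g) := ContinuousMap.ext fun U => by
    change (U.map r).map (g • ·) = (U.map (g • ·)).map r
    simp only [Ultrafilter.map_map, Function.comp_def, hr]
  refine DFunLike.ext _ _ fun f => ?_
  calc (g • pushforward p φ) f = (g • φ) (f.comp p) := by
        rw [smul_state_apply, smul_state_apply, pushforward_apply, ContinuousMap.comp_assoc,
          ContinuousMap.comp_assoc, hp]
    _ = pushforward p φ f := by rw [hφG, pushforward_apply]

theorem exists_equivariant_map_to_subgroup (H : Subgroup G) :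
    ∃ r : G → H, ∀ (h : H) (t : G), r (h • t) = h • r t := by
  let σ := QuotientGroup.rightRel H
  let rep (t : G) : G := (Quotient.mk σ t).out
  have hrep (t : G) : t * (rep t)⁻¹ ∈ H :=
    QuotientGroup.rightRel_apply.1 (Quotient.mk_out (s := σ) t)
  have hrep_smul (h : H) (t : G) : rep (h • t) = rep t := by
    refine congrArg Quotient.out (Quotient.sound (QuotientGroup.rightRel_apply.2 ?_))
    simp [Subgroup.smul_def]
  refine ⟨fun t => ⟨t * (rep t)⁻¹, hrep t⟩, fun h t => Subtype.ext ?_⟩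
  change (h • t) * (rep (h • t))⁻¹ = h * (t * (rep t)⁻¹)
  rw [hrep_smul, Subgroup.smul_def, smul_eq_mul, mul_assoc]

/-- The families `(s • f - f)` indexed by `s ∈ S`, for `f` a probability density on `α`. -/
def displacements (S : Finset G) : Set (S → ℓ¹(α, ℝ)) :=
  {v | ∃ f : α → ℝ, 0 ≤ f ∧ HasSum f 1 ∧ ∀ s t, v s t = f (s.1⁻¹ • t) - f t}

theorem convex_displacements (S : Finset G) : Convex ℝ (displacements (α := α) S) := by
  rintro v ⟨f, hf, hf1, hv⟩ w ⟨g, hg, hg1, hw⟩ a b ha hb hab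
  refine ⟨a • f + b • g, add_nonneg (smul_nonneg ha hf) (smul_nonneg hb hg), ?_, fun s t => ?_⟩
  · have h := (hf1.mul_left a).add (hg1.mul_left b)
    rwa [mul_one, mul_one, hab] at h
  · change a * v s t + b * w s t = _
    rw [hv, hw]
    simp only [Pi.add_apply, Pi.smul_apply, smul_eq_mul]
    ring

open scoped Classical in
/-- The point mass at `t`, as a probability density in `ℓ¹(α)`. -/
def pointDensity (t : α) : ℓ¹(α, ℝ) := lp.single 1 t 1

theorem norm_pointDensity (t : α) : ‖pointDensity t‖ = 1 := by
  classical exact (lp.norm_single one_pos t 1).trans norm_one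

theorem displacement_pointDensity_mem (S : Finset G) (t : α) :
    (fun s : S => pointDensity (s.1 • t) - pointDensity t) ∈ displacements S := by
  classical
  refine ⟨Pi.single t 1, Pi.single_nonneg.2 zero_le_one, hasSum_pi_single t 1, fun s t' => ?_⟩
  simp only [pointDensity, lp.coeFn_sub, lp.coeFn_single, Pi.sub_apply, Pi.single_apply,
    inv_smul_eq_iff]

/-- Otherwise a functional separates `0` from the displacements; evaluated at the displacements of
point masses it yields bounded functions `F s` on `α` with `∑ s, (s⁻¹ • F s - F s)` bounded below
by a positive constant, which no invariant mean allows. -/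
theorem HasInvariantMean.zero_mem_closure_displacements (hα : HasInvariantMean G α)
    (S : Finset G) : (0 : S → ℓ¹(α, ℝ)) ∈ closure (displacements S) := by
  classical
  obtain ⟨φ, hφ, hφG⟩ := hα
  by_contra h
  obtain ⟨ψ, u, hu0, hu⟩ :=
    geometric_hahn_banach_point_closed (convex_displacements S).closure isClosed_closure h
  rw [map_zero] at hu0
  have hbound (s : S) (t : α) : |ψ (Pi.single s (pointDensity t))| ≤ ‖ψ‖ := by
    have h := ψ.le_opNorm (Pi.single s (pointDensity t))
    rwa [Pi.norm_single, norm_pointDensity, mul_one] at h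
  choose F hF using fun s => exists_extension_ultrafilter (hbound s)
  have hle : u • (1 : C(Ultrafilter α, ℝ)) ≤ ∑ s : S, ((F s).comp (translation s.1) - F s) := by
    refine le_of_forall_pure_le fun t => ?_
    have hsum : ψ (fun s : S => pointDensity (s.1 • t) - pointDensity t) =
        ∑ s : S, (F s (pure (s.1 • t)) - F s (pure t)) := by
      rw [← Finset.univ_sum_single (fun s : S => pointDensity (s.1 • t) - pointDensity t), map_sum]
      simp only [hF, Pi.single_sub, map_sub]
    have hut := hu _ (subset_closure (displacement_pointDensity_mem S t))
    simpa [translation, smul_pure, hsum] using hut.le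
  have hφF : φ (∑ s : S, ((F s).comp (translation s.1) - F s)) = 0 := by
    simp only [map_sum, map_sub, ← smul_state_apply, hφG, sub_self, Finset.sum_const_zero]
  have hu_le : u ≤ 0 := by
    simpa only [hφF, map_smul, hφ.2, smul_eq_mul, mul_one] using state_mono hφ hle
  exact hu0.not_ge hu_le

/-- Reiter's condition. -/
theorem HasInvariantMean.exists_almost_invariant (hα : HasInvariantMean G α) (S : Finset G)
    {ε : ℝ} (hε : 0 < ε) :
    ∃ f : α → ℝ, 0 ≤ f ∧ HasSum f 1 ∧
      ∀ s ∈ S, ∃ c ≤ ε, HasSum (fun t => |f (s⁻¹ • t) - f t|) c := by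
  obtain ⟨v, ⟨f, hf, hf1, hv⟩, hvε⟩ :=
    Metric.mem_closure_iff.1 (hα.zero_mem_closure_displacements S) ε hε
  refine ⟨f, hf, hf1, fun s hs => ⟨‖v ⟨s, hs⟩‖, ?_, ?_⟩⟩
  · exact (norm_le_pi_norm v _).trans (dist_zero_left v ▸ hvε).le
  · simpa [hv] using lp.hasSum_norm (by simp) (v ⟨s, hs⟩)

end InvariantMeans

section Stabilizers

theorem IsFurstenberg.hasInvariantMean_stabilizer {G Y : Type u} [Group G] [TopologicalSpace Y]
    [CompactSpace Y] [T2Space Y] [MulAction G Y] [ContinuousConstSMul G Y]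
    (hY : IsFurstenberg G Y) (y : Y) :
    HasInvariantMean (MulAction.stabilizer G y) (MulAction.stabilizer G y) := by
  obtain ⟨q, hq, hqG⟩ := exists_equivariant_map_to_states (Z := Ultrafilter G) hY
  obtain ⟨r, hr⟩ := exists_equivariant_map_to_subgroup (MulAction.stabilizer G y)
  have hG : HasInvariantMean (MulAction.stabilizer G y) G :=
    ⟨q y, hq y, fun h => (hqG h y).symm.trans (congrArg q h.2)⟩
  exact hG.of_equivariant r hr

end Stabilizers

section AlmostInvariantVectors

theorem sq_sqrt_sub_sqrt_le {a b : ℝ} (ha : 0 ≤ a) (hb : 0 ≤ b) : (√a - √b) ^ 2 ≤ |a - b| := by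
  have hle : |√a - √b| ≤ √a + √b :=
    (abs_sub _ _).trans_eq (by rw [abs_of_nonneg a.sqrt_nonneg, abs_of_nonneg b.sqrt_nonneg])
  calc (√a - √b) ^ 2 = |√a - √b| * |√a - √b| := by rw [abs_mul_abs_self, sq]
    _ ≤ (√a + √b) * |√a - √b| := mul_le_mul_of_nonneg_right hle (abs_nonneg _)
    _ = |(√a + √b) * (√a - √b)| := by
      rw [abs_mul, abs_of_nonneg (add_nonneg a.sqrt_nonneg b.sqrt_nonneg)]
    _ = |a - b| := by rw [← sq_sub_sq, Real.sq_sqrt ha, Real.sq_sqrt hb]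

theorem hasSum_sq_norm {α : Type*} (ξ : ℓ²(α, ℂ)) : HasSum (fun t => ‖ξ t‖ ^ 2) (‖ξ‖ ^ 2) := by
  simpa using lp.hasSum_norm (p := 2) (by simp) ξ

theorem exists_almost_invariant_supported_subgroup {H : Subgroup G} (hH : HasInvariantMean H H)
    (S : Finset G) {ε : ℝ} (hε : 0 < ε) :
    ∃ f : G → ℝ, 0 ≤ f ∧ HasSum f 1 ∧ (∀ t ∉ H, f t = 0) ∧
      ∀ s ∈ S, s ∈ H → ∃ c ≤ ε, HasSum (fun t => |f (s⁻¹ * t) - f t|) c := by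
  classical
  obtain ⟨f, hf, hf1, hfS⟩ := hH.exists_almost_invariant (S.subtype (· ∈ H)) hε
  have hval : Function.Injective ((↑) : H → G) := Subtype.val_injective
  set F : G → ℝ := Function.extend (↑) f 0
  have hF_coe (h : H) : F h = f h := hval.extend_apply f 0 h
  have hF_zero : ∀ t ∉ H, F t = 0 := fun t ht =>
    Function.extend_apply' _ _ _ fun ⟨h, ht'⟩ => ht (ht' ▸ h.2)
  refine ⟨F, fun t => ?_, (hasSum_extend_zero hval).2 hf1, hF_zero, fun s hs hsH => ?_⟩
  · by_cases ht : t ∈ H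
    · exact (hf ⟨t, ht⟩).trans_eq (hF_coe ⟨t, ht⟩).symm
    · exact (hF_zero t ht).ge
  · obtain ⟨c, hc, hsum⟩ := hfS ⟨s, hsH⟩ (Finset.mem_subtype.2 hs)
    refine ⟨c, hc, (hval.hasSum_iff fun t ht => ?_).1 (hsum.congr_fun ?_)⟩
    · have htH : t ∉ H := by simpa using ht
      rw [hF_zero t htH, hF_zero _ fun h => htH ((H.mul_mem_cancel_left (H.inv_mem hsH)).1 h),
        sub_zero, abs_zero]
    · intro h
      have hsh : F (s⁻¹ * h) = f ((⟨s, hsH⟩ : H)⁻¹ • h) := hF_coe ((⟨s, hsH⟩ : H)⁻¹ • h)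
      rw [Function.comp_apply, hsh, hF_coe]

theorem lreg_apply (g : G) (ξ : ℓ²(G, ℂ)) (t : G) : lreg g ξ t = ξ (g⁻¹ * t) := by
  unfold lreg lregE
  rfl

theorem inner_lreg_eq_zero {H : Subgroup G} {ξ : ℓ²(G, ℂ)} (hξ : ∀ t ∉ H, ξ t = 0) {s : G}
    (hs : s ∉ H) : inner ℂ ξ (lreg s ξ) = 0 := by
  rw [lp.inner_eq_tsum]
  refine (tsum_congr fun t => ?_).trans tsum_zero
  rw [lreg_apply]
  by_cases ht : t ∈ H
  · rw [hξ (s⁻¹ * t) ((H.mul_mem_cancel_right ht).not.2 (H.inv_mem_iff.not.2 hs)),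
      inner_zero_right]
  · rw [hξ t ht, inner_zero_left]

theorem norm_inner_lreg_sub_one_le {ξ : ℓ²(G, ℂ)} (hξ : ‖ξ‖ = 1) (s : G) :
    ‖inner ℂ ξ (lreg s ξ) - 1‖ ≤ ‖lreg s ξ - ξ‖ :=
  calc ‖inner ℂ ξ (lreg s ξ) - 1‖ = ‖inner ℂ ξ (lreg s ξ - ξ)‖ := by
        rw [inner_sub_right, inner_self_eq_norm_sq_to_K, hξ]; simp
    _ ≤ ‖ξ‖ * ‖lreg s ξ - ξ‖ := norm_inner_le_norm _ _
    _ = ‖lreg s ξ - ξ‖ := by rw [hξ, one_mul]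

/-- The square root of an almost invariant probability density is an almost invariant unit
vector. -/
theorem exists_unit_vector_inner_lreg {H : Subgroup G} (hH : HasInvariantMean H H)
    (S : Finset G) {ε : ℝ} (hε : 0 < ε) :
    ∃ ξ : ℓ²(G, ℂ), ‖ξ‖ = 1 ∧
      ∀ s ∈ S, ‖inner ℂ ξ (lreg s ξ) - (H : Set G).indicator 1 s‖ ≤ ε := by
  obtain ⟨f, hf, hf1, hfH, hfS⟩ :=
    exists_almost_invariant_supported_subgroup hH S (sq_pos_of_pos hε)
  have hnorm (t : G) : ‖(√(f t) : ℂ)‖ ^ 2 = f t := by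
    rw [Complex.norm_real, Real.norm_eq_abs, sq_abs, Real.sq_sqrt (hf t)]
  let ξ : ℓ²(G, ℂ) := ⟨fun t => √(f t),
    memℓp_gen (by simpa [-Complex.norm_real, hnorm] using hf1.summable)⟩
  have hξ (t : G) : ξ t = √(f t) := rfl
  have hξ_one : ‖ξ‖ = 1 := by
    have h : ‖ξ‖ ^ 2 = 1 := (hasSum_sq_norm ξ).unique (by simpa only [hξ, hnorm] using hf1)
    exact (pow_eq_one_iff_of_nonneg (norm_nonneg _) two_ne_zero).1 h
  refine ⟨ξ, hξ_one, fun s hs => ?_⟩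
  by_cases hsH : s ∈ H
  · obtain ⟨c, hc, hsum⟩ := hfS s hs hsH
    have hle : ‖lreg s ξ - ξ‖ ^ 2 ≤ ε ^ 2 := by
      refine (hasSum_le (fun t => ?_) (hasSum_sq_norm (lreg s ξ - ξ)) hsum).trans hc
      rw [lp.coeFn_sub, Pi.sub_apply, lreg_apply, hξ, hξ, ← Complex.ofReal_sub,
        Complex.norm_real, Real.norm_eq_abs, sq_abs]
      exact sq_sqrt_sub_sqrt_le (hf _) (hf _)
    rw [Set.indicator_of_mem hsH]
    exact (norm_inner_lreg_sub_one_le hξ_one s).trans (le_of_sq_le_sq hle hε.le)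
  · have hξH : ∀ t ∉ H, ξ t = 0 := fun t ht => by rw [hξ, hfH t ht, Real.sqrt_zero]; rfl
    rw [Set.indicator_of_notMem hsH, inner_lreg_eq_zero hξH hsH, sub_zero, norm_zero]
    exact hε.le

end AlmostInvariantVectors

section ContractiveStates

theorem exists_mem_forall_eq_of_forall_finset {X ι M : Type*} [TopologicalSpace X] [MetricSpace M]
    {K : Set X} (hK : IsCompact K) {F : ι → X → M} (hF : ∀ i, Continuous (F i)) {c : ι → M}
    (h : ∀ S : Finset ι, ∀ ε > 0, ∃ x ∈ K, ∀ i ∈ S, dist (F i x) (c i) ≤ ε) :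
    ∃ x ∈ K, ∀ i, F i x = c i := by
  suffices c ∈ closure ((fun x i => F i x) '' K) by
    rw [(hK.image (continuous_pi hF)).isClosed.closure_eq] at this
    obtain ⟨x, hx, hxc⟩ := this
    exact ⟨x, hx, congrFun hxc⟩
  rw [mem_closure_iff_nhds_basis
    (nhds_pi (a := c) ▸ Filter.hasBasis_pi fun i => Metric.nhds_basis_closedBall (x := c i))]
  rintro ⟨I, r⟩ ⟨hI, hr⟩
  have hr' : ∀ᶠ ε in nhdsWithin (0 : ℝ) (Set.Ioi 0), ∀ i ∈ I, ε ∈ Set.Ioc 0 (r i) :=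
    (Filter.eventually_all_finite hI).2 fun i hi => Ioc_mem_nhdsGT (hr i hi)
  obtain ⟨ε, hε, hε_pos⟩ := (hr'.and self_mem_nhdsWithin).exists
  obtain ⟨x, hx, hxε⟩ := h hI.toFinset ε hε_pos
  exact ⟨_, ⟨x, hx, rfl⟩, fun i hi => (hxε i (hI.mem_toFinset.2 hi)).trans (hε i hi).2⟩

variable {A : Type*} [NormedRing A] [StarRing A] [NormedAlgebra ℂ A]

variable (A) in
/-- The contractive positive unital functionals on a normed `*`-algebra. -/
def contractiveStates : Set (WeakDual ℂ A) :=
  {φ | (∀ a, ‖φ a‖ ≤ ‖a‖) ∧ φ 1 = 1 ∧ ∀ a, 0 ≤ φ (star a * a)}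

theorem isCompact_contractiveStates : IsCompact (contractiveStates A) := by
  refine (WeakDual.isCompact_closedBall 0 1).of_isClosed_subset ?_ fun φ hφ =>
    mem_closedBall_zero_iff.2 ?_
  · simp only [contractiveStates, Set.ofPred_and, Set.ofPred_forall]
    refine (isClosed_iInter fun a => ?_).inter (.inter ?_ (isClosed_iInter fun a => ?_))
    · exact isClosed_le (WeakDual.eval_continuous a).norm continuous_const
    · exact isClosed_eq (WeakDual.eval_continuous 1) continuous_const
    · exact isClosed_le continuous_const (WeakDual.eval_continuous _)
  · exact ContinuousLinearMap.opNorm_le_bound _ zero_le_one fun a =>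
      (hφ.1 a).trans_eq (one_mul _).symm

open scoped InnerProductSpace

variable {E : Type*} [NormedAddCommGroup E] [InnerProductSpace ℂ E] [CompleteSpace E]
  (S : StarSubalgebra ℂ (E →L[ℂ] E))

/-- The functional `a ↦ ⟪ξ, a ξ⟫` on an algebra of operators. -/
def vectorState (ξ : E) : WeakDual ℂ S :=
  StrongDual.toWeakDual <| (innerSL ℂ ξ ∘L ContinuousLinearMap.apply ℂ E ξ) ∘L
    (Subalgebra.toSubmodule S.toSubalgebra).subtypeL

theorem vectorState_apply (ξ : E) (a : S) : vectorState S ξ a = ⟪ξ, a.1 ξ⟫_ℂ := rfl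

theorem vectorState_mem_contractiveStates {ξ : E} (hξ : ‖ξ‖ = 1) :
    vectorState S ξ ∈ contractiveStates S := by
  refine ⟨fun a => ?_, ?_, fun a => ?_⟩
  · calc ‖vectorState S ξ a‖ ≤ ‖ξ‖ * ‖a.1 ξ‖ := norm_inner_le_norm _ _
      _ ≤ ‖a‖ := by simpa [hξ] using a.1.le_opNorm ξ
  · rw [vectorState_apply, OneMemClass.coe_one, one_apply_eq_self,
      inner_self_eq_norm_sq_to_K, hξ]
    simp
  · have h : vectorState S ξ (star a * a) = ⟪a.1 ξ, a.1 ξ⟫_ℂ :=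
      ContinuousLinearMap.adjoint_inner_right _ _ _
    rw [h, inner_self_eq_norm_sq_to_K]
    exact pow_nonneg (Complex.zero_le_real.2 (norm_nonneg (a.1 ξ))) 2

end ContractiveStates

section MatrixPositivity

open scoped MatrixOrder Matrix.Norms.L2Operator InnerProductSpace

theorem posSemidef_of_forall_dotProduct_mulVec_nonneg {n : Type*} [Fintype n]
    {M : Matrix n n ℂ} (h : ∀ c, 0 ≤ star c ⬝ᵥ M.mulVec c) : M.PosSemidef := by
  classical
  rw [← Matrix.isPositive_toEuclideanLin_iff, LinearMap.isPositive_iff_complex]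
  intro x
  have hx : 0 ≤ ⟪x, M.toEuclideanLin x⟫_ℂ := by
    rw [EuclideanSpace.inner_eq_star_dotProduct, dotProduct_comm]
    exact h x
  rw [← inner_conj_symm, Complex.conj_eq_iff_re.2 (Complex.eq_re_of_ofReal_le hx).symm]
  exact ⟨(Complex.eq_re_of_ofReal_le hx).symm, (Complex.nonneg_iff.1 hx).1⟩

variable {A n : Type*} [NormedRing A] [StarRing A] [NormedAlgebra ℂ A] [StarModule ℂ A] [Fintype n]

theorem posSemidef_map_of_mem_contractiveStates {φ : WeakDual ℂ A} (hφ : φ ∈ contractiveStates A)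
    (N : Matrix n n A) : ((star N * N).map φ).PosSemidef := by
  refine posSemidef_of_forall_dotProduct_mulVec_nonneg fun c => ?_
  have hentry (i j : n) : (star N * N) i j = ∑ k, star (N k i) * N k j := Matrix.mul_apply
  have hsq (k : n) : φ (star (∑ j, c j • N k j) * ∑ j, c j • N k j) =
      ∑ i, ∑ j, star (c i) * (φ (star (N k i) * N k j) * c j) := by
    simp only [star_sum, star_smul, Finset.sum_mul_sum, smul_mul_smul_comm, map_sum, map_smul,
      smul_eq_mul]
    exact Finset.sum_congr rfl fun i _ => Finset.sum_congr rfl fun j _ => by ring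
  have hsum : star c ⬝ᵥ ((star N * N).map φ).mulVec c =
      ∑ k, φ (star (∑ j, c j • N k j) * ∑ j, c j • N k j) := by
    simp only [hsq]
    simp only [dotProduct, Matrix.mulVec, Matrix.map_apply, hentry, Pi.star_apply, map_sum,
      Finset.sum_mul, Finset.mul_sum]
    exact Finset.sum_comm_cycle
  rw [hsum]
  exact Finset.sum_nonneg fun k _ => hφ.2.2 _

theorem exists_eq_star_mul_self {Y : Type*} [TopologicalSpace Y]
    (M : Matrix n n C(Y, ℂ)) (hM : ∀ y, (M.map fun f => f y).PosSemidef) :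
    ∃ P : Matrix n n C(Y, ℂ), M = star P * P := by
  classical
  have hM_nonneg (y : Y) : 0 ≤ M.map fun f => f y := Matrix.nonneg_iff_posSemidef.2 (hM y)
  have hM_cont : Continuous fun y => M.map fun f => f y :=
    continuous_matrix fun i j => (M i j).continuous
  have hsqrt_cont : Continuous fun y => CFC.sqrt (M.map fun f => f y) := by
    simp only [CFC.sqrt_eq_cfc]
    exact hM_cont.cfc_nnreal_of_mem_nhdsSet (s := Set.univ) _ Filter.univ_mem hM_nonneg
      NNReal.continuous_sqrt.continuousOn
  refine ⟨.of fun i j => ⟨fun y => CFC.sqrt (M.map fun f => f y) i j,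
    hsqrt_cont.matrix_elem i j⟩, ?_⟩
  ext i j y
  have hsqrt : star (CFC.sqrt (M.map fun f => f y)) * CFC.sqrt (M.map fun f => f y) =
      M.map fun f => f y := by
    rw [(IsSelfAdjoint.of_nonneg (CFC.sqrt_nonneg _)).star_eq,
      CFC.sqrt_mul_sqrt_self _ (hM_nonneg y)]
  have hij : M i j y = (M.map fun f => f y) i j := rfl
  rw [hij, ← hsqrt]
  simp [Matrix.mul_apply, ContinuousMap.sum_apply, Matrix.star_apply]

end MatrixPositivity

section ReducedGroupAlgebra

theorem lreg_mul (g h : G) : lreg (g * h) = lreg g * lreg h := by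
  ext ξ t
  change lreg (g * h) ξ t = lreg g (lreg h ξ) t
  rw [lreg_apply, lreg_apply, lreg_apply, mul_inv_rev, mul_assoc]

theorem lreg_one : lreg (1 : G) = 1 := by
  ext ξ t
  change lreg 1 ξ t = ξ t
  rw [lreg_apply, inv_one, one_mul]

theorem star_lreg (g : G) : star (lreg g) = lreg g⁻¹ := by
  have hisom : star (lreg g) * lreg g = 1 := by
    unfold lreg
    exact ContinuousLinearMap.norm_map_iff_adjoint_comp_self _ |>.1 (lregE g).norm_map
  refine left_inv_eq_right_inv hisom ?_
  rw [← lreg_mul, mul_inv_cancel, lreg_one]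

theorem coe_uu (g : G) : (uu g : ℓ²(G, ℂ) →L[ℂ] ℓ²(G, ℂ)) = lreg g := by
  unfold uu
  rfl

theorem uu_mul (g h : G) : uu (g * h) = uu g * uu h :=
  Subtype.ext <| by rw [MulMemClass.coe_mul, coe_uu, coe_uu, coe_uu, lreg_mul]

theorem adjoin_range_lreg_le_span :
    Subalgebra.toSubmodule (StarAlgebra.adjoin ℂ (Set.range (lreg (G := G)))).toSubalgebra ≤
      Submodule.span ℂ (Set.range (lreg (G := G))) := by
  let lregHom : G →* (ℓ²(G, ℂ) →L[ℂ] ℓ²(G, ℂ)) := ⟨⟨lreg, lreg_one⟩, lreg_mul⟩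
  have hclosure : Submonoid.closure (Set.range lreg ∪ star (Set.range lreg)) ≤
      MonoidHom.mrange lregHom := by
    rw [Submonoid.closure_le]
    rintro T (⟨g, rfl⟩ | ⟨g, hg⟩)
    · exact ⟨g, rfl⟩
    · exact ⟨g⁻¹, by rw [← star_star T, ← hg, star_lreg]; rfl⟩
  rw [StarAlgebra.adjoin_eq_span]
  exact Submodule.span_mono hclosure

theorem coe_redCstar : (redCstar G : Set (ℓ²(G, ℂ) →L[ℂ] ℓ²(G, ℂ))) =
    closure (StarAlgebra.adjoin ℂ (Set.range (lreg (G := G))) : Set _) := by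
  unfold redCstar
  exact StarSubalgebra.topologicalClosure_coe _

variable (G) in
theorem dense_span_range_uu :
    Dense (Submodule.span ℂ (Set.range (uu (G := G))) : Set (redCstar G)) := by
  have hspan : Submodule.span ℂ (Set.range (lreg (G := G))) =
      (Submodule.span ℂ (Set.range uu)).map (redCstar G).subtype.toLinearMap := by
    rw [Submodule.map_span, ← Set.range_comp]
    exact congrArg (fun f => Submodule.span ℂ (Set.range f)) (funext fun g => (coe_uu g).symm)
  refine Topology.IsInducing.subtypeVal.dense_iff.2 fun a => ?_
  have ha : a.1 ∈ closure (StarAlgebra.adjoin ℂ (Set.range (lreg (G := G))) : Set _) :=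
    coe_redCstar.subset a.2
  refine closure_mono (fun x hx => ?_) ha
  exact hspan.le (adjoin_range_lreg_le_span hx)

theorem exists_contractiveState_indicator {H : Subgroup G} (hH : HasInvariantMean H H) :
    ∃ φ ∈ contractiveStates (redCstar G), ∀ s, φ (uu s) = (H : Set G).indicator 1 s := by
  refine exists_mem_forall_eq_of_forall_finset isCompact_contractiveStates
    (F := fun s φ => φ (uu s)) (fun s => WeakDual.eval_continuous _) fun S ε hε => ?_
  obtain ⟨ξ, hξ, hξS⟩ := exists_unit_vector_inner_lreg hH S hε
  refine ⟨vectorState _ ξ, vectorState_mem_contractiveStates _ hξ, fun s hs => ?_⟩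
  rw [dist_eq_norm, vectorState_apply, coe_uu]
  exact hξS s hs

end ReducedGroupAlgebra

section StateFields

theorem continuous_weakDual_of_dense_span {𝕜 E Y : Type*} [RCLike 𝕜] [SeminormedAddCommGroup E]
    [NormedSpace 𝕜 E] [TopologicalSpace Y] {φ : Y → WeakDual 𝕜 E} (hφ : ∀ y e, ‖φ y e‖ ≤ ‖e‖)
    {D : Set E} (hD : Dense (Submodule.span 𝕜 D : Set E))
    (hφD : ∀ e ∈ D, Continuous fun y => φ y e) : Continuous φ := by
  have hspan : ∀ e ∈ Submodule.span 𝕜 D, Continuous fun y => φ y e := fun e he => by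
    induction he using Submodule.span_induction with
    | mem e he => exact hφD e he
    | zero => simpa only [map_zero] using continuous_const
    | add e e' _ _ he he' =>
      simp only [map_add]
      exact he.add he'
    | smul c e _ he =>
      simp only [map_smul]
      exact he.const_smul c
  refine WeakDual.continuous_of_continuous_eval fun e =>
    continuous_of_uniform_approx_of_continuous fun u hu => ?_
  obtain ⟨ε, hε, hεu⟩ := Metric.mem_uniformity_dist.1 hu
  obtain ⟨e', he', hee'⟩ := Metric.dense_iff.1 hD e ε hε
  refine ⟨fun y => φ y e', hspan e' hee', fun y => hεu ?_⟩
  calc dist (φ y e) (φ y e') = ‖φ y (e - e')‖ := by rw [dist_eq_norm, map_sub]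
    _ ≤ ‖e - e'‖ := hφ y _
    _ < ε := by rwa [← dist_eq_norm, dist_comm]

variable {Y : Type u} [TopologicalSpace Y]

theorem isUCP_of_forall_mem_contractiveStates {φ : Y → WeakDual ℂ (redCstar G)}
    (hφ : ∀ y, φ y ∈ contractiveStates (redCstar G)) {Φ : redCstar G →L[ℂ] C(Y, ℂ)}
    (hΦ : ∀ a y, Φ a y = φ y a) : IsUCP Φ := by
  refine ⟨ContinuousMap.ext fun y => (hΦ 1 y).trans (hφ y).2.1, ?_⟩
  rintro n _ ⟨N, rfl⟩
  refine exists_eq_star_mul_self _ fun y => ?_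
  convert posSemidef_map_of_mem_contractiveStates (hφ y) N using 1
  ext i j
  exact hΦ _ y

variable [MulAction G Y]

theorem isEquivariant_of_forall_uu {Φ : redCstar G →L[ℂ] C(Y, ℂ)}
    (h : ∀ g s y, Φ (uu (g * s * g⁻¹)) y = Φ (uu s) (g⁻¹ • y)) : IsEquivariant Φ := by
  intro g a y
  have hext : (ContinuousMap.evalCLM ℂ y ∘L Φ) ∘L
      (ContinuousLinearMap.mul ℂ (redCstar G)).flip (uu g⁻¹) ∘L
        ContinuousLinearMap.mul ℂ (redCstar G) (uu g) =
      ContinuousMap.evalCLM ℂ (g⁻¹ • y) ∘L Φ := by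
    refine ContinuousLinearMap.ext_on (dense_span_range_uu G) ?_
    rintro _ ⟨s, rfl⟩
    have := h g s y
    rw [uu_mul, uu_mul] at this
    exact this
  exact DFunLike.congr_fun hext a

variable [CompactSpace Y] [T2Space Y] [ContinuousConstSMul G Y]

theorem IsFurstenberg.exists_continuous_contractiveStates (hY : IsFurstenberg G Y) :
    ∃ φ : C(Y, WeakDual ℂ (redCstar G)), (∀ y, φ y ∈ contractiveStates (redCstar G)) ∧
      ∀ s y, φ y (uu s) = {x : Y | s • x = x}.indicator (fun _ => 1) y := by
  choose φ hφ hφs using fun y =>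
    exists_contractiveState_indicator (hY.hasInvariantMean_stabilizer y)
  have hfix (s : G) (y : Y) : φ y (uu s) = {x : Y | s • x = x}.indicator (fun _ => 1) y := by
    rw [hφs]
    rfl
  refine ⟨⟨φ, continuous_weakDual_of_dense_span (fun y => (hφ y).1) (dense_span_range_uu G) ?_⟩,
    hφ, hfix⟩
  rintro _ ⟨s, rfl⟩
  simp only [hfix]
  exact (hY.isClopen_fixedPoints s).continuous_indicator continuous_const

end StateFields

/-- On a Furstenberg boundary, every fixed-point set `Fix(s)` is clopen, and there is a
`G`-equivariant u.c.p. map `C*_λ(G) → C(∂_F G)` sending each `λ_s` to the indicator function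
of `Fix(s)`. -/
theorem exists_equivariant_ucp_to_fix_indicators (G : Type u) [Group G] (Y : Type u)
    [TopologicalSpace Y] [CompactSpace Y] [T2Space Y] [MulAction G Y] [ContinuousConstSMul G Y]
    (hY : IsFurstenberg G Y) :
    (∀ s : G, IsClopen {x : Y | s • x = x}) ∧
    ∃ Φ : redCstar G →L[ℂ] C(Y, ℂ), IsUCP Φ ∧ IsEquivariant Φ ∧
      ∀ (s : G) (x : Y),
        Φ (uu s) x = ({x : Y | s • x = x}).indicator (fun _ => (1 : ℂ)) x := by
  refine ⟨hY.isClopen_fixedPoints, ?_⟩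
  obtain ⟨φ, hφ, hφs⟩ := hY.exists_continuous_contractiveStates
  refine ⟨evalFamily φ fun y => (hφ y).1,
    isUCP_of_forall_mem_contractiveStates hφ fun _ _ => rfl,
    isEquivariant_of_forall_uu fun g s y => ?_, hφs⟩
  have hconj : (g * s * g⁻¹) • y = y ↔ s • g⁻¹ • y = g⁻¹ • y := by
    rw [mul_smul, mul_smul, smul_eq_iff_eq_inv_smul]
  rw [evalFamily_apply, evalFamily_apply, hφs, hφs]
  exact Set.indicator_const_eq_indicator_const hconj
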